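/- arXiv:2401.04034 — 2 statements merged into one kernel-verified Lean document; each statement's English description precedes it below -/
import Mathlib

section
/- Let d ≥ 1, let a < b be real numbers, and let φ : ℝ^d → ℝ be locally Lipschitz and Lipschitz on the closure of φ⁻¹((a,b]). Assume μ := inf{Δ(∂φ(x)) : x ∈ φ⁻¹((a,b])} > 0. Then for every ε with 0 < ε < μ there exists a continuous map C : [0,1] × φ⁻¹((−∞,b]) → φ⁻¹((−∞,b]) such that: (i) C(0,x) = x for every x; (ii) whenever 0 ≤ t < s ≤ 1 and C(s,x) ∈ φ⁻¹((a,b]), one has φ(C(s,x)) − φ(C(t,x)) ≤ −(s−t)(b−a); (iii) C(t,x) = x for every t ∈ [0,1] and every x with φ(x) ≤ a; (iv) for every x, the map s ↦ C(s,x) is Lipschitz with constant (b−a)/(μ−ε); (v) φ(C(1,x)) ≤ a for every x. In particular, φ⁻¹((−∞,a]) is a strong deformation retract of φ⁻¹((−∞,b]). -/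
open Metric Set Filter Topology RealInnerProductSpace

noncomputable section

/-- Euclidean space ℝ^d. -/
abbrev Euc (d : ℕ) := EuclideanSpace ℝ (Fin d)

variable {d : ℕ}

/-- The Clarke gradient of a (locally Lipschitz) function `φ` at `x`: the convex hull of
all limits of gradients `∇φ(xᵢ)` along sequences `xᵢ → x` of points of differentiability. -/
def clarkeGradient (φ : Euc d → ℝ) (x : Euc d) : Set (Euc d) :=
  convexHull ℝ {v | ∃ u : ℕ → Euc d,
    Tendsto u atTop (𝓝 x) ∧ (∀ i, DifferentiableAt ℝ φ (u i)) ∧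
    Tendsto (fun i => gradient φ (u i)) atTop (𝓝 v)}

/-- `Δ(S)`: the distance from the origin to the set `S`. -/
def Delta (S : Set (Euc d)) : ℝ := infDist 0 S

/-- The polar (dual) cone of a set `B`. -/
def polarCone (B : Set (Euc d)) : Set (Euc d) :=
  {u | ∀ b ∈ B, ⟪u, b⟫ ≤ (0:ℝ)}

/-- A set has positive reach: there is `t > 0` such that every point at distance `< t`
from `A` has a unique nearest point in `A`. -/
def HasPositiveReach (A : Set (Euc d)) : Prop :=
  ∃ t > (0:ℝ), ∀ x : Euc d, infDist x A < t →
    ∃! y : Euc d, y ∈ A ∧ dist x y = infDist x A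

/-- The "complement set" `X̄ᶜ := closure (ℝ^d ∖ X)`. -/
def compSet (X : Set (Euc d)) : Set (Euc d) := closure Xᶜ

/-- `reach_μ(X) > 0`: there is `s > 0` with `Δ(∂d_X(x)) ≥ μ` whenever `0 < d_X(x) ≤ s`. -/
def MuReachPos (μ : ℝ) (X : Set (Euc d)) : Prop :=
  ∃ s > (0:ℝ), ∀ x : Euc d, 0 < infDist x X → infDist x X ≤ s →
    μ ≤ Delta (clarkeGradient (fun y => infDist y X) x)

/-- Complementary regular set. -/
def ComplementaryRegular (X : Set (Euc d)) : Prop :=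
  X.Nonempty ∧ IsCompact X ∧ closure (interior X) = X ∧
  (∃ μ : ℝ, 0 < μ ∧ μ ≤ 1 ∧ MuReachPos μ X) ∧ HasPositiveReach (compSet X)

/-- Critical point of `f` restricted to a complementary regular set `X`. -/
def IsCriticalPoint (X : Set (Euc d)) (f : Euc d → ℝ) (x : Euc d) : Prop :=
  x ∈ X ∧ ((x ∈ interior X ∧ gradient f x = 0) ∨
    (x ∈ frontier X ∧ gradient f x ∈ polarCone (tangentConeAt ℝ (compSet X) x)))

/-- Regular value of `f|X`. -/
def IsRegularValue (X : Set (Euc d)) (f : Euc d → ℝ) (c : ℝ) : Prop :=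
  ∀ x, IsCriticalPoint X f x → f x ≠ c

/-- `A` is a strong deformation retract of `B`. -/
def IsStrongDefRetract (A B : Set (Euc d)) : Prop :=
  ∃ H : ℝ → Euc d → Euc d,
    ContinuousOn (fun p : ℝ × Euc d => H p.1 p.2) (Icc (0:ℝ) 1 ×ˢ B) ∧
    (∀ t ∈ Icc (0:ℝ) 1, ∀ b ∈ B, H t b ∈ B) ∧
    (∀ b ∈ B, H 0 b = b) ∧ (∀ b ∈ B, H 1 b ∈ A) ∧
    (∀ t ∈ Icc (0:ℝ) 1, ∀ a ∈ A, H t a = a)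

/-- The counter-offset `X^{-r} = {x | d_{X̄ᶜ}(x) ≥ r}` for `r > 0`, with `X^{-0} := X`. -/
def counterOffset (X : Set (Euc d)) (r : ℝ) : Set (Euc d) :=
  if r = 0 then X else {x | r ≤ infDist x (compSet X)}

/-- The unit normal bundle of a complementary regular set, with
`Nor(X,x) := -(Tan(X̄ᶜ,x))°`. -/
def normalBundle (X : Set (Euc d)) : Set (Euc d × Euc d) :=
  {p | p.1 ∈ frontier X ∧ ‖p.2‖ = 1 ∧ -p.2 ∈ polarCone (tangentConeAt ℝ (compSet X) p.1)}

/-- A pair `(x,n)` of the unit normal bundle is regular if the tangent cone of `Nor(X)`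
at `(x,n)` is a linear subspace of dimension `d - 1`. -/
def IsRegularPair (X : Set (Euc d)) (x n : Euc d) : Prop :=
  (x, n) ∈ normalBundle X ∧ ∃ T : Submodule ℝ (Euc d × Euc d),
    (T : Set (Euc d × Euc d)) = tangentConeAt ℝ (normalBundle X) (x, n) ∧
    Module.finrank ℝ T = d - 1

/-- A non-degenerate critical point of `f|X`: `∇f(x) ≠ 0`, the pair
`(x, -∇f(x)/‖∇f(x)‖)` is regular, and the restricted Hessian
`H_x f(u,·) + ‖∇f(x)‖·⟪u,·⟫` is non-degenerate on `π₀(Tan(Nor(X),(x,n)))`. -/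
def NonDegenerateCriticalPoint (X : Set (Euc d)) (f : Euc d → ℝ) (x : Euc d) : Prop :=
  IsCriticalPoint X f x ∧ gradient f x ≠ 0 ∧
  IsRegularPair X x (-(‖gradient f x‖⁻¹ • gradient f x)) ∧
  ∀ u : Euc d, u ≠ 0 →
    (∃ v, (u, v) ∈ tangentConeAt ℝ (normalBundle X) (x, -(‖gradient f x‖⁻¹ • gradient f x))) →
    ∃ u' v', (u', v') ∈ tangentConeAt ℝ (normalBundle X)
        (x, -(‖gradient f x‖⁻¹ • gradient f x)) ∧
      ⟪(fderiv ℝ (gradient f) x) u, u'⟫ + ‖gradient f x‖ * ⟪u, v'⟫ ≠ 0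


open MeasureTheory in
/-- A Lipschitz function whose derivative in direction `v` is at most `-β` wherever it exists
in a ball decreases at rate `β` along segments in direction `v` in the ball. -/
theorem lip_decrease {K : NNReal} {g : Euc d → ℝ} (hg : LipschitzWith K g) (v x : Euc d)
    (β R : ℝ)
    (hd : ∀ y ∈ ball x R, DifferentiableAt ℝ g y → fderiv ℝ g y v ≤ -β)
    (y : Euc d) (h : ℝ) (hh : 0 ≤ h) (hy : dist y x + h * ‖v‖ < R) :
    g (y + h • v) - g y ≤ -(β * h) := by
  by_contra hcon
  push Not at hcon
  set D := g (y + h • v) - g y with hD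
  obtain ⟨c, hc1, hc2⟩ := exists_between hcon
  have hev : ∀ᶠ z in 𝓝 y, c < g (z + h • v) - g z := by
    have hc : Continuous fun z => g (z + h • v) - g z := by
      have := hg.continuous
      fun_prop
    exact hc.continuousAt.eventually (lt_mem_nhds hc2)
  obtain ⟨ρ0, hρ0, hρ⟩ := Metric.eventually_nhds_iff_ball.1 hev
  obtain ⟨ρ, hρpos, hρle⟩ := exists_between (lt_min hρ0 (sub_pos.2 hy))
  have hρ1 : ρ < ρ0 := hρle.trans_le (min_le_left _ _)
  have hρ2 : ρ < R - (dist y x + h * ‖v‖) := hρle.trans_le (min_le_right _ _)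
  have hfin : IsFiniteMeasure (volume.restrict (ball y ρ) : Measure (Euc d)) :=
    ⟨by simpa using measure_ball_lt_top⟩
  have hgi : ∀ s : ℝ, Integrable (fun z => g (z + s • v)) (volume.restrict (ball y ρ)) := by
    intro s
    have hc : Continuous fun z => g (z + s • v) := by
      have := hg.continuous
      fun_prop
    exact (hc.continuousOn.integrableOn_compact (isCompact_closedBall y ρ)).mono_set
      ball_subset_closedBall
  have hder : ∀ s : ℝ,
      Integrable (fun z => fderiv ℝ g (z + s • v) v) (volume.restrict (ball y ρ)) ∧
      HasDerivAt (fun s : ℝ => ∫ z in ball y ρ, g (z + s • v))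
        (∫ z in ball y ρ, fderiv ℝ g (z + s • v) v) s := by
    intro s
    refine hasDerivAt_integral_of_dominated_loc_of_lip (s := univ)
      (F := fun (s : ℝ) (z : Euc d) => g (z + s • v)) (bound := fun _ => (K : ℝ) * ‖v‖)
      univ_mem ?_ (hgi s) ?_ ?_ (integrable_const _) ?_
    · exact Eventually.of_forall fun s => (hgi s).aestronglyMeasurable
    · have := (measurable_fderiv_apply_const ℝ g v).comp (measurable_add_const (s • v))
      exact this.aestronglyMeasurable
    · refine Eventually.of_forall fun z => LipschitzWith.lipschitzOnWith ?_
      refine LipschitzWith.of_dist_le_mul fun p q => ?_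
      have h1 := hg.dist_le_mul (z + p • v) (z + q • v)
      refine h1.trans ?_
      have : (Real.nnabs ((K:ℝ) * ‖v‖) : ℝ) = K * ‖v‖ := by
        rw [Real.coe_nnabs, abs_of_nonneg (by positivity)]
      rw [this, dist_add_left, dist_eq_norm, ← sub_smul, norm_smul, dist_eq_norm]
      apply le_of_eq; ring
    · apply ae_restrict_of_ae
      have h1 : ∀ᵐ z : Euc d, DifferentiableAt ℝ g (z + s • v) :=
        (measurePreserving_add_right volume (s • v)).quasiMeasurePreserving.ae
          hg.ae_differentiableAt
      filter_upwards [h1] with z hz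
      have h2 : HasDerivAt (fun s : ℝ => z + s • v) v s := by
        simpa using ((hasDerivAt_id s).smul_const v).const_add z
      exact hz.hasFDerivAt.comp_hasDerivAt s h2
  set m := (volume : Measure (Euc d)).real (ball y ρ) with hm
  have hmpos : 0 < m := by
    rw [hm, measureReal_def]
    exact ENNReal.toReal_pos (measure_ball_pos _ _ hρpos).ne' measure_ball_lt_top.ne
  have hbound : ∀ s ∈ Ioo 0 h, (∫ z in ball y ρ, fderiv ℝ g (z + s • v) v) ≤ -β * m := by
    intro s hs
    have h1 : ∀ᵐ z : Euc d, DifferentiableAt ℝ g (z + s • v) :=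
        (measurePreserving_add_right volume (s • v)).quasiMeasurePreserving.ae
          hg.ae_differentiableAt
    have h2 : (∫ z in ball y ρ, fderiv ℝ g (z + s • v) v) ≤ ∫ z in ball y ρ, -β := by
      refine setIntegral_mono_on_ae (hder s).1 (integrable_const _) measurableSet_ball ?_
      filter_upwards [h1] with z hz hzb
      refine hd _ ?_ hz
      rw [mem_ball] at hzb ⊢
      have h3 : dist (z + s • v) x ≤ dist (z + s • v) z + dist z y + dist y x := dist_triangle4 _ _ _ _
      have h4 : dist (z + s • v) z = s * ‖v‖ := by
        rw [dist_eq_norm, add_sub_cancel_left, norm_smul, Real.norm_of_nonneg hs.1.le]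
      have h5 : s * ‖v‖ ≤ h * ‖v‖ := by gcongr; exact hs.2.le
      linarith
    refine h2.trans (le_of_eq ?_)
    rw [setIntegral_const, smul_eq_mul, ← hm]; ring
  have hMVT := Convex.image_sub_le_mul_sub_of_deriv_le (convex_Icc 0 h)
    (f := fun s : ℝ => ∫ z in ball y ρ, g (z + s • v))
    (fun s _ => (hder s).2.continuousAt.continuousWithinAt)
    (fun s _ => (hder s).2.differentiableAt.differentiableWithinAt)
    (C := -β * m)
    (fun s hs => by
      rw [interior_Icc] at hs
      rw [(hder s).2.deriv]; exact hbound s hs) 0 (left_mem_Icc.2 hh) h (right_mem_Icc.2 hh) hh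
  rw [← integral_sub (hgi h) (hgi 0)] at hMVT
  have hlow : c * m ≤ ∫ z in ball y ρ, (g (z + h • v) - g (z + (0:ℝ) • v)) := by
    have h2 : ∫ z in ball y ρ, c ≤ ∫ z in ball y ρ, (g (z + h • v) - g (z + (0:ℝ) • v)) := by
      refine setIntegral_mono_on (integrable_const _) ((hgi h).sub (hgi 0)) measurableSet_ball ?_
      intro z hz
      simp only [zero_smul, add_zero]
      exact (hρ z (ball_subset_ball hρ1.le hz)).le
    refine le_trans (le_of_eq ?_) h2
    rw [setIntegral_const, smul_eq_mul, ← hm]; ring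
  nlinarith

/-- Uniform local decrease of `φ` near `x` in direction `v` at rate `ρ`. -/
def Desc (φ : Euc d → ℝ) (ρ : ℝ) (x v : Euc d) : Prop :=
  ∃ r > (0:ℝ), ∀ y ∈ ball x r, ∀ h ∈ Ico (0:ℝ) r, φ (y + h • v) - φ y ≤ -(ρ * h)


theorem exists_dir (S : Set (Euc d)) (hS : Convex ℝ S) (μ : ℝ) (hμ : 0 < μ)
    (h : μ ≤ infDist 0 S) : ∃ v : Euc d, ‖v‖ = 1 ∧ ∀ w ∈ S, ⟪v, w⟫ ≤ -μ := by
  have hne : S.Nonempty := by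
    by_contra hne
    rw [not_nonempty_iff_eq_empty] at hne
    rw [hne, infDist_empty] at h; linarith
  obtain ⟨m, hm, hmin⟩ := exists_norm_eq_iInf_of_complete_convex hne.closure
    isClosed_closure.isComplete hS.closure 0
  rw [norm_eq_iInf_iff_real_inner_le_zero hS.closure hm] at hmin
  have hmμ : μ ≤ ‖m‖ := by
    rw [← infDist_closure] at h
    have := infDist_le_dist_of_mem (x := 0) hm
    rw [dist_zero_left] at this
    linarith
  have hmp : 0 < ‖m‖ := hμ.trans_le hmμ
  refine ⟨-(‖m‖⁻¹ • m), ?_, fun w hw => ?_⟩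
  · rw [norm_neg, norm_smul, norm_inv, norm_norm, inv_mul_cancel₀ hmp.ne']
  · have h1 := hmin w (subset_closure hw)
    rw [zero_sub, inner_neg_left, inner_sub_right, real_inner_self_eq_norm_sq] at h1
    rw [inner_neg_left, real_inner_smul_left]
    have h2 : ‖m‖ ≤ ‖m‖⁻¹ * ⟪m, w⟫ := by
      rw [le_inv_mul_iff₀ hmp]; nlinarith
    linarith

theorem exists_desc (φ : Euc d → ℝ) (hφ : LocallyLipschitz φ) (x : Euc d) (μ k M : ℝ)
    (hk : 0 < k) (hkμ : k < μ) (hM : 0 < M) (h : μ ≤ Delta (clarkeGradient φ x)) :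
    ∃ v : Euc d, ‖v‖ ≤ M ∧ Desc φ (k * M) x v := by
  obtain ⟨v0, hv0, hv⟩ := exists_dir _ (convex_convexHull ℝ _) μ (hk.trans hkμ) h
  obtain ⟨K, t, ht, hK⟩ := hφ x
  obtain ⟨R, hR, hRt⟩ := Metric.mem_nhds_iff.1 ht
  have key : ∃ r > 0, r ≤ R ∧ ∀ y ∈ ball x r, DifferentiableAt ℝ φ y → fderiv ℝ φ y v0 ≤ -k := by
    by_contra hcon
    push Not at hcon
    have hpos : ∀ n : ℕ, (0:ℝ) < R / (n + 1) := fun n => by positivity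
    have hle : ∀ n : ℕ, R / (n + 1) ≤ R := fun n => div_le_self hR.le (by linarith [(Nat.cast_nonneg n : (0:ℝ) ≤ n)])
    choose u hu hud huk using fun n : ℕ => hcon (R / (n + 1)) (hpos n) (hle n)
    have hux : Tendsto u atTop (𝓝 x) := by
      rw [tendsto_iff_dist_tendsto_zero]
      refine squeeze_zero (fun _ => dist_nonneg) (fun n => (mem_ball.1 (hu n)).le) ?_
      have := (tendsto_one_div_add_atTop_nhds_zero_nat (𝕜 := ℝ)).const_mul R
      simpa [div_eq_mul_inv] using this
    have hgb : ∀ n, gradient φ (u n) ∈ closedBall (0 : Euc d) K := by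
      intro n
      rw [mem_closedBall_zero_iff]
      have h1 : ‖fderiv ℝ φ (u n)‖ ≤ K := by
        refine norm_fderiv_le_of_lipschitzOn ℝ (s := ball x R) ?_ (hK.mono hRt)
        exact isOpen_ball.mem_nhds (ball_subset_ball (hle n) (hu n))
      rw [← toDual_gradient, LinearIsometryEquiv.norm_map] at h1
      exact h1
    obtain ⟨ξ, -, s, hs, hsξ⟩ := (isCompact_closedBall (0 : Euc d) K).tendsto_subseq hgb
    have hξ : ξ ∈ clarkeGradient φ x := by
      apply subset_convexHull
      exact ⟨u ∘ s, hux.comp hs.tendsto_atTop, fun i => hud _, hsξ⟩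
    have h1 := hv ξ hξ
    have h2 : -k ≤ ⟪v0, ξ⟫ := by
      have h3 : Tendsto (fun i => ⟪v0, gradient φ (u (s i))⟫) atTop (𝓝 ⟪v0, ξ⟫) :=
        tendsto_const_nhds.inner hsξ
      refine ge_of_tendsto' h3 fun i => ?_
      have h4 := huk (s i)
      rw [← toDual_gradient, InnerProductSpace.toDual_apply_apply, real_inner_comm] at h4
      exact h4.le
    linarith
  obtain ⟨r, hr, hrR, hrd⟩ := key
  obtain ⟨g, hg, hgφ⟩ := (hK.mono hRt).extend_real
  refine ⟨M • v0, by rw [norm_smul, hv0, Real.norm_of_nonneg hM.le, mul_one], ?_⟩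
  have hnorm : ‖M • v0‖ = M := by rw [norm_smul, hv0, Real.norm_of_nonneg hM.le, mul_one]
  refine ⟨min (r / 2) (r / 2 / M), by positivity, fun y hy h hh => ?_⟩
  have hy1 : dist y x < r / 2 := (mem_ball.1 hy).trans_le (min_le_left _ _)
  have hh1 : h * M < r / 2 := by
    have := hh.2.trans_le (min_le_right _ _)
    rwa [lt_div_iff₀ hM] at this
  have hsum : dist y x + h * ‖M • v0‖ < r := by rw [hnorm]; linarith
  have hdec := lip_decrease hg (M • v0) x (k * M) r (fun z hz hzd => by
    have hloc : φ =ᶠ[𝓝 z] g := by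
      filter_upwards [isOpen_ball.mem_nhds (ball_subset_ball hrR hz)] with w hw using hgφ hw
    have h1 := hrd z hz (hloc.differentiableAt_iff.2 hzd)
    rw [hloc.fderiv_eq] at h1
    rw [map_smul, smul_eq_mul]
    nlinarith) y h hh.1 hsum
  rw [hgφ, hgφ]
  · exact hdec
  · exact mem_ball.2 (by linarith)
  · rw [mem_ball]
    have : dist (y + h • M • v0) x ≤ dist (y + h • M • v0) y + dist y x := dist_triangle _ _ _
    have h4 : dist (y + h • M • v0) y = h * ‖M • v0‖ := by
      rw [dist_eq_norm, add_sub_cancel_left, norm_smul, Real.norm_of_nonneg hh.1]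
    linarith


theorem desc_convex (φ : Euc d → ℝ) (ρ : ℝ) (x : Euc d) : Convex ℝ {v | Desc φ ρ x v} := by
  rintro v1 ⟨r1, hr1, h1⟩ v2 ⟨r2, hr2, h2⟩ p q hp hq hpq
  refine ⟨min r1 (min r2 (min (r2 / 2) (r2 / 2 / (‖v1‖ + 1)))), by positivity, fun y hy h hh => ?_⟩
  simp only [mem_ball, lt_min_iff, mem_Ico] at hy hh
  obtain ⟨hy1, hy2, hy3, -⟩ := hy
  obtain ⟨hh0, hh1, hh2, hh3, hh4⟩ := hh
  have hp1 : p ≤ 1 := by linarith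
  have hq1 : q ≤ 1 := by linarith
  have e1 := h1 y hy1 (h * p) ⟨by positivity, by nlinarith⟩
  have hmem : y + (h * p) • v1 ∈ ball x r2 := by
    rw [mem_ball]
    have h3 : dist (y + (h * p) • v1) x ≤ dist (y + (h * p) • v1) y + dist y x :=
      dist_triangle _ _ _
    have h4 : dist (y + (h * p) • v1) y = h * p * ‖v1‖ := by
      rw [dist_eq_norm, add_sub_cancel_left, norm_smul, Real.norm_of_nonneg (by positivity)]
    have h5 : h * (‖v1‖ + 1) < r2 / 2 := by rwa [lt_div_iff₀ (by positivity)] at hh4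
    have h6 : h * p * ‖v1‖ ≤ h * 1 * (‖v1‖ + 1) := by
      gcongr; linarith
    linarith
  have e2 := h2 _ hmem (h * q) ⟨by positivity, by nlinarith⟩
  have e3 : y + h • (p • v1 + q • v2) = y + (h * p) • v1 + (h * q) • v2 := by
    rw [smul_add, smul_smul, smul_smul, add_assoc]
  rw [e3]
  have : ρ * h = ρ * (h * p) + ρ * (h * q) := by
    rw [← mul_add, ← mul_add, hpq, mul_one]
  linarith

theorem desc_open {φ : Euc d → ℝ} {ρ : ℝ} {x v : Euc d} (h : Desc φ ρ x v) :
    ∀ᶠ y in 𝓝 x, Desc φ ρ y v := by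
  obtain ⟨r, hr, h⟩ := h
  filter_upwards [ball_mem_nhds x (half_pos hr)] with y hy
  refine ⟨r / 2, half_pos hr, fun z hz t ht => h z ?_ t ⟨ht.1, by linarith [ht.2]⟩⟩
  rw [mem_ball] at *
  linarith [dist_triangle z y x]

theorem desc_smul {φ : Euc d → ℝ} {ρ : ℝ} {x v : Euc d} (h : Desc φ ρ x v) (c : ℝ)
    (hc0 : 0 ≤ c) (hc1 : c ≤ 1) : Desc φ (ρ * c) x (c • v) := by
  obtain ⟨r, hr, h⟩ := h
  refine ⟨r, hr, fun y hy t ht => ?_⟩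
  have := h y hy (t * c) ⟨mul_nonneg ht.1 hc0, by nlinarith [ht.1, ht.2]⟩
  rw [smul_smul]
  linarith

theorem exists_field (φ : Euc d → ℝ) (W : Set (Euc d)) (hW : IsOpen W) (M ρ : ℝ)
    (h : ∀ x ∈ W, ∃ v : Euc d, ‖v‖ ≤ M ∧ Desc φ ρ x v) :
    ∃ V : Euc d → Euc d, ∀ x ∈ W, ContDiffAt ℝ 1 V x ∧ ‖V x‖ ≤ M ∧ Desc φ ρ x (V x) := by
  classical
  let W' : TopologicalSpace.Opens (Euc d) := ⟨W, hW⟩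
  have hsc : SigmaCompactSpace W' := by
    have : LocallyCompactSpace W' := hW.locallyCompactSpace
    infer_instance
  obtain ⟨g, hg⟩ := exists_contMDiffMap_forall_mem_convex_of_local_const
    (M := W') (n := 1) (modelWithCornersSelf ℝ (Euc d))
    (t := fun x : W' => closedBall (0 : Euc d) M ∩ {v | Desc φ ρ (x : Euc d) v})
    (fun x => (convex_closedBall _ _).inter (desc_convex φ ρ x)) (fun x => by
      obtain ⟨v, hv, hd⟩ := h x x.2
      refine ⟨v, ?_⟩
      have hc : ContinuousAt (fun y : W' => (y : Euc d)) x :=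
        continuous_subtype_val.continuousAt
      have := hc.eventually (desc_open hd)
      filter_upwards [this] with y hy
      exact ⟨by simpa using hv, hy⟩)
  refine ⟨fun y => if hy : y ∈ W then g ⟨y, hy⟩ else 0, fun x hx => ⟨?_, ?_⟩⟩
  · rw [← contMDiffAt_iff_contDiffAt]
    have := (contMDiffAt_subtype_iff (I := modelWithCornersSelf ℝ (Euc d))
      (I' := modelWithCornersSelf ℝ (Euc d)) (n := 1) (U := W')
      (f := fun y => if hy : y ∈ W then g ⟨y, hy⟩ else 0) (x := ⟨x, hx⟩)).1
    apply this
    have e : (fun y : W' => if hy : (y : Euc d) ∈ W then g ⟨y, hy⟩ else 0) = g := by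
      funext y
      have : (y : Euc d) ∈ W := y.2
      simp [this]
    rw [e]
    exact g.contMDiff _
  · have := hg ⟨x, hx⟩
    simp only [hx, dite_true]
    exact ⟨by simpa using this.1, this.2⟩

theorem exists_cut (φ : Euc d → ℝ) (hφ : Continuous φ) (a b c : ℝ)
    (W : Set (Euc d)) (hW : IsOpen W) (hWa : ∀ x ∈ W, a < φ x)
    (hWb : ∀ x, a < φ x → φ x ≤ b → x ∈ W) (M ρ : ℝ) (hac : a < c)
    (V : Euc d → Euc d)
    (hV : ∀ x ∈ W, ContDiffAt ℝ 1 V x ∧ ‖V x‖ ≤ M ∧ Desc φ ρ x (V x)) :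
    ∃ (X : Euc d → Euc d) (χ : Euc d → ℝ), ContDiff ℝ 1 X ∧
      (∀ x, χ x ∈ Icc (0:ℝ) 1) ∧ (∀ x, ‖X x‖ ≤ M * χ x) ∧ (∀ x, Desc φ (ρ * χ x) x (X x)) ∧
      (∀ x, c ≤ φ x → φ x ≤ b → χ x = 1 ∧ X x = V x) ∧ (∀ x, φ x ≤ a → X x = 0) := by
  have hcl : IsClosed {x | c ≤ φ x ∧ φ x ≤ b} :=
    (isClosed_le continuous_const hφ).inter (isClosed_le hφ continuous_const)
  have hdis : Disjoint Wᶜ {x | c ≤ φ x ∧ φ x ≤ b} := by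
    rw [disjoint_left]
    intro x hx hx2
    exact hx (hWb x (hac.trans_le hx2.1) hx2.2)
  obtain ⟨f, hf0, hf1, hf⟩ := exists_contMDiffMap_zero_one_nhds_of_isClosed (n := 1)
    (modelWithCornersSelf ℝ (Euc d)) hW.isClosed_compl hcl hdis
  have hf0' : ∀ x ∉ W, ∀ᶠ y in 𝓝 x, f y = 0 := fun x hx =>
    hf0.filter_mono (nhds_le_nhdsSet hx)
  have hf1' : ∀ x, c ≤ φ x → φ x ≤ b → f x = 1 := fun x h1 h2 =>
    (hf1.filter_mono (nhds_le_nhdsSet (show x ∈ {x | c ≤ φ x ∧ φ x ≤ b} from ⟨h1, h2⟩))).self_of_nhds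
  refine ⟨fun x => f x • V x, f, ?_, hf, ?_, ?_, ?_, ?_⟩
  · rw [contDiff_iff_contDiffAt]
    intro x
    by_cases hx : x ∈ W
    · exact (contMDiffAt_iff_contDiffAt.1 (f.contMDiff x)).smul (hV x hx).1
    · refine (contDiffAt_const (c := (0 : Euc d))).congr_of_eventuallyEq ?_
      filter_upwards [hf0' x hx] with y hy
      simp [hy]
  · intro x
    by_cases hx : x ∈ W
    · rw [norm_smul, Real.norm_of_nonneg (hf x).1, mul_comm]
      exact mul_le_mul_of_nonneg_right (hV x hx).2.1 (hf x).1
    · simp [(hf0' x hx).self_of_nhds]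
  · intro x
    by_cases hx : x ∈ W
    · exact desc_smul (hV x hx).2.2 _ (hf x).1 (hf x).2
    · simp only [(hf0' x hx).self_of_nhds]
      exact ⟨1, one_pos, fun y _ h _ => by simp⟩
  · intro x h1 h2
    refine ⟨hf1' x h1 h2, ?_⟩
    simp [hf1' x h1 h2]
  · intro x hx
    have : x ∉ W := fun h => absurd (hWa x h) (not_lt.2 hx)
    simp [(hf0' x this).self_of_nhds]


/-- `γ` solves the autonomous equation `γ' = X(γ)` on `[0,1]` with `γ 0 = x`. -/
def Sol (X : Euc d → Euc d) (γ : ℝ → Euc d) (x : Euc d) : Prop :=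
  γ 0 = x ∧ ∀ t ∈ Icc (0:ℝ) 1, HasDerivWithinAt γ (X (γ t)) (Icc (0:ℝ) 1) t

theorem lip_ball {X : Euc d → Euc d} (hX : ContDiff ℝ 1 X) (x : Euc d) (R : ℝ) :
    ∃ K, LipschitzOnWith K X (closedBall x R) :=
  hX.contDiffOn.exists_lipschitzOnWith one_ne_zero (convex_closedBall _ _)
    (isCompact_closedBall _ _)

theorem exists_sol {X : Euc d → Euc d} (hX : ContDiff ℝ 1 X) (M : NNReal)
    (hM : ∀ x, ‖X x‖ ≤ M) (x : Euc d) : ∃ γ, Sol X γ x := by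
  obtain ⟨K, hK⟩ := lip_ball hX x M
  have hpl : IsPicardLindelof (fun _ => X) (tmin := 0) (tmax := 1) ⟨0, by simp⟩ x M 0 M K :=
    IsPicardLindelof.of_time_independent (fun y _ => hM y) hK (by simp)
  exact hpl.exists_eq_forall_mem_Icc_hasDerivWithinAt₀

theorem Sol.cont {X : Euc d → Euc d} {γ : ℝ → Euc d} {x : Euc d} (h : Sol X γ x) :
    ContinuousOn γ (Icc (0:ℝ) 1) := fun t ht => (h.2 t ht).continuousWithinAt

theorem Sol.right {X : Euc d → Euc d} {γ : ℝ → Euc d} {x : Euc d} (h : Sol X γ x) {t : ℝ}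
    (ht : t ∈ Ico (0:ℝ) 1) : HasDerivWithinAt γ (X (γ t)) (Ici t) t := by
  refine (h.2 t (Ico_subset_Icc_self ht)).mono_of_mem_nhdsWithin ?_
  exact Icc_mem_nhdsGE_of_mem ht

theorem Sol.lip {X : Euc d → Euc d} {γ : ℝ → Euc d} {x : Euc d} (h : Sol X γ x) {M : NNReal}
    (hM : ∀ x, ‖X x‖ ≤ M) : LipschitzOnWith M γ (Icc (0:ℝ) 1) :=
  (convex_Icc (0:ℝ) 1).lipschitzOnWith_of_nnnorm_hasDerivWithin_le h.2 (fun _ _ => hM _)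

theorem sol_unique {X : Euc d → Euc d} (hX : ContDiff ℝ 1 X) {f g : ℝ → Euc d} {p q : ℝ}
    (hf : ContinuousOn f (Icc p q)) (hg : ContinuousOn g (Icc p q))
    (hf' : ∀ t ∈ Ico p q, HasDerivWithinAt f (X (f t)) (Ici t) t)
    (hg' : ∀ t ∈ Ico p q, HasDerivWithinAt g (X (g t)) (Ici t) t) (h : f p = g p) :
    EqOn f g (Icc p q) := by
  obtain ⟨R, hR⟩ := ((isCompact_Icc.image_of_continuousOn hf).union
    (isCompact_Icc.image_of_continuousOn hg)).isBounded.subset_closedBall (0 : Euc d)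
  obtain ⟨K, hK⟩ := lip_ball hX 0 R
  refine ODE_solution_unique_of_mem_Icc_right (v := fun _ => X) (s := fun _ => closedBall 0 R)
    (K := K) (fun t _ => hK) hf hf' ?_ hg hg' ?_ h
  · exact fun t ht => hR (Or.inl (mem_image_of_mem _ (Ico_subset_Icc_self ht)))
  · exact fun t ht => hR (Or.inr (mem_image_of_mem _ (Ico_subset_Icc_self ht)))

theorem flow_cont {X : Euc d → Euc d} (hX : ContDiff ℝ 1 X) (M : NNReal)
    (hM : ∀ x, ‖X x‖ ≤ M) (Φ : Euc d → ℝ → Euc d) (hΦ : ∀ x, Sol X (Φ x) x) :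
    ContinuousOn (fun p : ℝ × Euc d => Φ p.2 p.1) (Icc (0:ℝ) 1 ×ˢ univ) := by
  refine continuousOn_prod_of_continuousOn_lipschitzOnWith _ M ?_ (fun x _ => (hΦ x).lip hM)
  intro t ht
  rw [continuousOn_univ, continuous_iff_continuousAt]
  intro x
  obtain ⟨K, hK⟩ := lip_ball hX x (M + 1)
  have hstay : ∀ y ∈ ball x 1, ∀ s ∈ Icc (0:ℝ) 1, Φ y s ∈ closedBall x (M + 1) := by
    intro y hy s hs
    have h1 := ((hΦ y).lip hM).dist_le_mul s hs 0 (by simp)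
    rw [(hΦ y).1, Real.dist_eq, sub_zero, abs_of_nonneg hs.1] at h1
    rw [mem_closedBall]
    have h2 : (M : ℝ) * s ≤ M := mul_le_of_le_one_right M.2 hs.2
    have := dist_triangle (Φ y s) y x
    rw [mem_ball] at hy
    linarith
  show Tendsto (fun y => Φ y t) (𝓝 x) (𝓝 (Φ x t))
  rw [tendsto_iff_dist_tendsto_zero]
  have hlim : Tendsto (fun y => dist y x * Real.exp (K * (t - 0))) (𝓝 x) (𝓝 0) := by
    have : Continuous fun y => dist y x * Real.exp (K * (t - 0)) := by fun_prop
    simpa using this.tendsto x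
  refine squeeze_zero' (Eventually.of_forall fun _ => dist_nonneg) ?_ hlim
  filter_upwards [ball_mem_nhds x one_pos] with y hy
  have hx : x ∈ ball x (1:ℝ) := mem_ball_self one_pos
  refine dist_le_of_trajectories_ODE_of_mem (v := fun _ => X) (s := fun _ => closedBall x (M + 1))
    (a := 0) (b := 1) (fun _ _ => hK) (hΦ y).cont (fun s hs => (hΦ y).right hs)
    (fun s hs => hstay y hy s (Ico_subset_Icc_self hs)) (hΦ x).cont (fun s hs => (hΦ x).right hs)
    (fun s hs => hstay x hx s (Ico_subset_Icc_self hs)) ?_ t ht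
  rw [(hΦ y).1, (hΦ x).1]

theorem deriv_near {γ : ℝ → Euc d} {t : ℝ} {v : Euc d} (hγ : HasDerivWithinAt γ v (Ici t) t)
    {η : ℝ} (hη : 0 < η) :
    ∀ᶠ z in 𝓝[>] t, ‖γ z - γ t - (z - t) • v‖ ≤ η * (z - t) := by
  have h1 := (hasDerivWithinAt_iff_isLittleO.1 hγ).def hη
  have h2 : 𝓝[>] t ≤ 𝓝[≥] t := nhdsWithin_mono _ Ioi_subset_Ici_self
  filter_upwards [h2 h1, self_mem_nhdsWithin] with z hz hzt
  rwa [Real.norm_of_nonneg (sub_nonneg.2 (le_of_lt hzt))] at hz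

theorem dini {φ : Euc d → ℝ} (hφ : LocallyLipschitz φ) {γ : ℝ → Euc d} {t ρ r : ℝ} {v : Euc d}
    (hγ : HasDerivWithinAt γ v (Ici t) t) (hd : Desc φ ρ (γ t) v) (hr : -ρ < r) :
    ∀ᶠ z in 𝓝[>] t, φ (γ z) - φ (γ t) < r * (z - t) := by
  obtain ⟨K, T, hT, hK⟩ := hφ (γ t)
  obtain ⟨r0, hr0, hd⟩ := hd
  have hKp : (0:ℝ) < K + 1 := by positivity
  have hη : 0 < (r + ρ) / 2 / (K + 1) := by
    have : 0 < r + ρ := by linarith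
    positivity
  have h2 : 𝓝[>] t ≤ 𝓝[≥] t := nhdsWithin_mono _ Ioi_subset_Ici_self
  have h3 : ∀ᶠ z in 𝓝[>] t, γ z ∈ T := (hγ.continuousWithinAt.tendsto.mono_left h2) hT
  have h4 : ∀ᶠ z in 𝓝[>] t, γ t + (z - t) • v ∈ T := by
    have hc : Continuous fun z : ℝ => γ t + (z - t) • v := by fun_prop
    have := hc.tendsto t
    simp only [sub_self, zero_smul, add_zero] at this
    exact (this.mono_left nhdsWithin_le_nhds) hT
  have h5 : ∀ᶠ z in 𝓝[>] t, z < t + r0 :=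
    nhdsWithin_le_nhds (Iio_mem_nhds (by linarith))
  filter_upwards [h3, h4, h5, deriv_near hγ hη, self_mem_nhdsWithin] with z z3 z4 z5 z6 z7
  rw [mem_Ioi] at z7
  have e1 := hd (γ t) (mem_ball_self hr0) (z - t) ⟨by linarith, by linarith⟩
  have e2 := hK.dist_le_mul _ z3 _ z4
  rw [dist_eq_norm (γ z), ← sub_sub, Real.dist_eq] at e2
  have e3 : (K:ℝ) * ‖γ z - γ t - (z - t) • v‖ ≤ K * ((r + ρ) / 2 / (K + 1) * (z - t)) := by
    gcongr
  have e4 : (K:ℝ) * ((r + ρ) / 2 / (K + 1) * (z - t)) ≤ (r + ρ) / 2 * (z - t) := by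
    have : (K:ℝ) * ((r + ρ) / 2 / (K + 1)) ≤ (r + ρ) / 2 := by
      calc (K:ℝ) * ((r + ρ) / 2 / (K + 1)) ≤ (K + 1) * ((r + ρ) / 2 / (K + 1)) := by
            gcongr; linarith
        _ = (r + ρ) / 2 := by field_simp
    nlinarith
  have e5 := le_abs_self (φ (γ z) - φ (γ t + (z - t) • v))
  nlinarith

theorem est {φ : Euc d → ℝ} (hφ : LocallyLipschitz φ) {γ v : ℝ → Euc d} {ρ : ℝ → ℝ} {p q k β : ℝ}
    (hpq : p ≤ q) (hk : 0 ≤ k) (hc : ContinuousOn γ (Icc p q))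
    (hγ : ∀ t ∈ Ico p q, HasDerivWithinAt γ (v t) (Ici t) t)
    (hd : ∀ t ∈ Ico p q, Desc φ (ρ t) (γ t) (v t))
    (hρ : ∀ t ∈ Ico p q, k * ‖v t‖ + β ≤ ρ t) :
    φ (γ q) + k * dist (γ q) (γ p) ≤ φ (γ p) - β * (q - p) := by
  have hfc : ContinuousOn (fun s => φ (γ s) + k * dist (γ s) (γ p)) (Icc p q) :=
    (hφ.continuous.comp_continuousOn hc).add
      (continuousOn_const.mul ((show Continuous (fun y => dist y (γ p)) by fun_prop).comp_continuousOn hc))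
  have := image_le_of_liminf_slope_right_le_deriv_boundary hfc
    (B := fun s => φ (γ p) - β * (s - p)) (B' := fun _ => -β) (by simp) (by fun_prop)
    (fun s _ => by
      have h1 : HasDerivAt (fun s : ℝ => φ (γ p) - β * (s - p)) (-β) s := by
        simpa using (((hasDerivAt_id s).sub_const p).const_mul β).const_sub (φ (γ p))
      exact h1.hasDerivWithinAt)
    (fun t ht r hr => by
      apply Eventually.frequently
      have hrp : 0 < (r + β) / 2 := by linarith
      have hη : 0 < (r + β) / 2 / (k + 1) := by positivity
      have h1 := dini hφ (hγ t ht) (hd t ht) (r := -ρ t + (r + β) / 2) (by linarith)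
      filter_upwards [h1, deriv_near (hγ t ht) hη, self_mem_nhdsWithin] with z z1 z2 z3
      rw [mem_Ioi] at z3
      have hzt : 0 < z - t := by linarith
      rw [slope_def_field, div_lt_iff₀ hzt]
      have e1 : dist (γ z) (γ p) ≤ dist (γ z) (γ t) + dist (γ t) (γ p) := dist_triangle _ _ _
      have e2 : dist (γ z) (γ t) ≤ (‖v t‖ + (r + β) / 2 / (k + 1)) * (z - t) := by
        rw [dist_eq_norm]
        have := norm_add_le (γ z - γ t - (z - t) • v t) ((z - t) • v t)
        rw [sub_add_cancel, norm_smul, Real.norm_of_nonneg hzt.le] at this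
        linarith
      have e3 : k * ((r + β) / 2 / (k + 1)) ≤ (r + β) / 2 := by
        calc k * ((r + β) / 2 / (k + 1)) ≤ (k + 1) * ((r + β) / 2 / (k + 1)) := by
              gcongr; linarith
          _ = (r + β) / 2 := by field_simp
      have e4 : k * (dist (γ z) (γ p) - dist (γ t) (γ p)) ≤
          k * ((‖v t‖ + (r + β) / 2 / (k + 1)) * (z - t)) := by
        apply mul_le_mul_of_nonneg_left _ hk; linarith
      have e5 : k * ((‖v t‖ + (r + β) / 2 / (k + 1)) * (z - t)) ≤
          (k * ‖v t‖ + (r + β) / 2) * (z - t) := by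
        rw [← mul_assoc]
        apply mul_le_mul_of_nonneg_right _ hzt.le
        linarith
      have e6 : (k * ‖v t‖ + (r + β) / 2) * (z - t) ≤ (ρ t - β + (r + β) / 2) * (z - t) := by
        apply mul_le_mul_of_nonneg_right _ hzt.le
        linarith [hρ t ht]
      linarith)
  exact this (right_mem_Icc.2 hpq)


/-- A vector field `X` obtained by cutting off `V` below the level `c`. -/
structure CutField (φ : Euc d → ℝ) (a b c k M : ℝ) (V X : Euc d → Euc d) (χ : Euc d → ℝ) :
    Prop where
  smooth : ContDiff ℝ 1 X
  mem : ∀ x, χ x ∈ Icc (0:ℝ) 1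
  bd : ∀ x, ‖X x‖ ≤ M * χ x
  desc : ∀ x, Desc φ (k * M * χ x) x (X x)
  full : ∀ x, c ≤ φ x → φ x ≤ b → χ x = 1 ∧ X x = V x
  zero : ∀ x, φ x ≤ a → X x = 0

theorem CutField.move {φ : Euc d → ℝ} {a b c k M : ℝ} {V X : Euc d → Euc d} {χ : Euc d → ℝ}
    (H : CutField φ a b c k M V X χ) (hφ : LocallyLipschitz φ) (hk : 0 ≤ k)
    {γ : ℝ → Euc d} {x : Euc d} (hγ : Sol X γ x) {p q : ℝ} (hp : 0 ≤ p) (hpq : p ≤ q)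
    (hq : q ≤ 1) : φ (γ q) + k * dist (γ q) (γ p) ≤ φ (γ p) := by
  have := est hφ (γ := γ) (v := fun t => X (γ t)) (ρ := fun t => k * M * χ (γ t)) (k := k) (β := 0)
    hpq hk (hγ.cont.mono (Icc_subset_Icc hp hq))
    (fun t ht => hγ.right ⟨hp.trans ht.1, ht.2.trans_le hq⟩) (fun t _ => H.desc _)
    (fun t _ => by
      have := mul_le_mul_of_nonneg_left (H.bd (γ t)) hk
      rw [← mul_assoc] at this
      linarith)
  linarith

theorem CutField.anti {φ : Euc d → ℝ} {a b c k M : ℝ} {V X : Euc d → Euc d} {χ : Euc d → ℝ}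
    (H : CutField φ a b c k M V X χ) (hφ : LocallyLipschitz φ) (hk : 0 ≤ k)
    {γ : ℝ → Euc d} {x : Euc d} (hγ : Sol X γ x) {p q : ℝ} (hp : 0 ≤ p) (hpq : p ≤ q)
    (hq : q ≤ 1) : φ (γ q) ≤ φ (γ p) := by
  have h1 := H.move hφ hk hγ hp hpq hq
  have h2 : 0 ≤ k * dist (γ q) (γ p) := by positivity
  linarith

theorem CutField.const {φ : Euc d → ℝ} {a b c k M : ℝ} {V X : Euc d → Euc d} {χ : Euc d → ℝ}
    (H : CutField φ a b c k M V X χ)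
    {γ : ℝ → Euc d} {x : Euc d} (hγ : Sol X γ x) {p q : ℝ} (hp : 0 ≤ p) (hpq : p ≤ q)
    (hq : q ≤ 1) (h : φ (γ p) ≤ a) : γ q = γ p := by
  refine sol_unique H.smooth (f := γ) (g := fun _ => γ p) (p := p) (q := q)
    (hγ.cont.mono (Icc_subset_Icc hp hq)) continuousOn_const
    (fun t ht => hγ.right ⟨hp.trans ht.1, ht.2.trans_le hq⟩) (fun t _ => ?_) rfl
    (right_mem_Icc.2 hpq)
  rw [H.zero _ h]
  exact hasDerivWithinAt_const _ _ _

theorem Sol.phiCont {φ : Euc d → ℝ} (hφ : LocallyLipschitz φ) {X : Euc d → Euc d}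
    {γ : ℝ → Euc d} {x : Euc d} (hγ : Sol X γ x) {p q : ℝ} (hp : 0 ≤ p) (hq : q ≤ 1) :
    ContinuousOn (fun t => φ (γ t)) (Icc p q) :=
  hφ.continuous.comp_continuousOn (hγ.cont.mono (Icc_subset_Icc hp hq))

theorem CutField.small {φ : Euc d → ℝ} {a b c k M : ℝ} {V X : Euc d → Euc d} {χ : Euc d → ℝ}
    (H : CutField φ a b c k M V X χ) (hφ : LocallyLipschitz φ) (hk : 0 ≤ k)
    {γ : ℝ → Euc d} {x : Euc d} (hγ : Sol X γ x) {p q e : ℝ} (hp : 0 ≤ p) (hpq : p ≤ q)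
    (hq : q ≤ 1) (he : a ≤ e) (h : φ (γ p) ≤ e) : k * dist (γ q) (γ p) ≤ e - a := by
  rcases le_total (φ (γ p)) a with h1 | h1
  · rw [H.const hγ hp hpq hq h1, dist_self]
    linarith
  rcases le_total a (φ (γ q)) with h2 | h2
  · have := H.move hφ hk hγ hp hpq hq
    linarith
  obtain ⟨u, hu, hua⟩ := intermediate_value_Icc' hpq (hγ.phiCont hφ hp hq) ⟨h2, h1⟩
  have hua : φ (γ u) = a := hua
  have h3 := H.const hγ (hp.trans hu.1) hu.2 hq hua.le
  have := H.move hφ hk hγ hp hpq hq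
  rw [h3, hua] at this
  rw [h3]
  linarith

theorem CutField.agree {φ : Euc d → ℝ} {a b c c' k M : ℝ} {V X X' : Euc d → Euc d}
    {χ χ' : Euc d → ℝ}
    (H : CutField φ a b c k M V X χ) (H' : CutField φ a b c' k M V X' χ') (hcc : c' ≤ c)
    (hφ : LocallyLipschitz φ) (hk : 0 ≤ k)
    {γ γ' : ℝ → Euc d} {x : Euc d} (hγ : Sol X γ x) (hγ' : Sol X' γ' x) (hxb : φ x ≤ b)
    {t : ℝ} (ht0 : 0 ≤ t) (ht1 : t ≤ 1) (h : c ≤ φ (γ t)) : γ t = γ' t := by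
  refine sol_unique H'.smooth (p := 0) (q := t)
    (hγ.cont.mono (Icc_subset_Icc le_rfl ht1)) (hγ'.cont.mono (Icc_subset_Icc le_rfl ht1))
    (fun s hs => ?_) (fun s hs => hγ'.right ⟨hs.1, hs.2.trans_le ht1⟩) (hγ.1.trans hγ'.1.symm)
    (right_mem_Icc.2 ht0)
  have h1 : c ≤ φ (γ s) := h.trans (H.anti hφ hk hγ hs.1 hs.2.le ht1)
  have h2 : φ (γ s) ≤ b := by
    have := H.anti hφ hk hγ le_rfl hs.1 (hs.2.le.trans ht1)
    rw [hγ.1] at this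
    linarith
  rw [(H'.full _ (hcc.trans h1) h2).2, ← (H.full _ h1 h2).2]
  exact hγ.right ⟨hs.1, hs.2.trans_le ht1⟩

theorem CutField.close {φ : Euc d → ℝ} {a b c c' k M : ℝ} {V X X' : Euc d → Euc d}
    {χ χ' : Euc d → ℝ}
    (H : CutField φ a b c k M V X χ) (H' : CutField φ a b c' k M V X' χ') (hcc : c' ≤ c)
    (hac : a ≤ c) (hφ : LocallyLipschitz φ) (hk : 0 ≤ k)
    {γ γ' : ℝ → Euc d} {x : Euc d} (hγ : Sol X γ x) (hγ' : Sol X' γ' x) (hxb : φ x ≤ b)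
    {t : ℝ} (ht0 : 0 ≤ t) (ht1 : t ≤ 1) : k * dist (γ t) (γ' t) ≤ 2 * (c - a) := by
  have key : ∀ s, 0 ≤ s → s ≤ t → γ s = γ' s → φ (γ s) ≤ c →
      k * dist (γ t) (γ' t) ≤ 2 * (c - a) := by
    intro s hs0 hst he hc
    have h1 := H.small hφ hk hγ hs0 hst ht1 hac hc
    rw [he] at hc
    have h2 := H'.small hφ hk hγ' hs0 hst ht1 hac hc
    rw [he] at h1
    have h3 := mul_le_mul_of_nonneg_left (dist_triangle_right (γ t) (γ' t) (γ' s)) hk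
    rw [mul_add] at h3
    linarith
  rcases le_total c (φ (γ t)) with h | h
  · rw [H.agree H' hcc hφ hk hγ hγ' hxb ht0 ht1 h, dist_self]
    linarith
  rcases le_total (φ x) c with h' | h'
  · exact key 0 le_rfl ht0 (hγ.1.trans hγ'.1.symm) (by rwa [hγ.1])
  have h'' : c ≤ φ (γ 0) := by rwa [hγ.1]
  obtain ⟨u, hu, huc⟩ := intermediate_value_Icc' ht0 (hγ.phiCont hφ le_rfl ht1) ⟨h, h''⟩
  have huc : φ (γ u) = c := huc
  exact key u hu.1 hu.2
    (H.agree H' hcc hφ hk hγ hγ' hxb hu.1 (hu.2.trans ht1) huc.ge) huc.le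

theorem CutField.speed {φ : Euc d → ℝ} {a b c k M : ℝ} {V X : Euc d → Euc d} {χ : Euc d → ℝ}
    (H : CutField φ a b c k M V X χ) (hφ : LocallyLipschitz φ) (hk : 0 ≤ k)
    {γ : ℝ → Euc d} {x : Euc d} (hγ : Sol X γ x) (hxb : φ x ≤ b)
    {p q : ℝ} (hp : 0 ≤ p) (hpq : p ≤ q)
    (hq : q ≤ 1) (h : c ≤ φ (γ q)) : φ (γ q) ≤ φ (γ p) - k * M * (q - p) := by
  have := est hφ (γ := γ) (v := fun t => X (γ t)) (ρ := fun t => k * M * χ (γ t)) (k := 0)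
    (β := k * M)
    hpq le_rfl (hγ.cont.mono (Icc_subset_Icc hp hq))
    (fun t ht => hγ.right ⟨hp.trans ht.1, ht.2.trans_le hq⟩) (fun t _ => H.desc _)
    (fun t ht => by
      have h1 : c ≤ φ (γ t) := h.trans (H.anti hφ hk hγ (hp.trans ht.1) ht.2.le hq)
      have h2 : φ (γ t) ≤ b := by
        have := H.anti hφ hk hγ le_rfl (hp.trans ht.1) (ht.2.le.trans hq)
        rw [hγ.1] at this
        linarith
      rw [(H.full _ h1 h2).1]
      linarith)
  linarith

theorem flow_limit {φ : Euc d → ℝ} {a b k M : ℝ} {V : Euc d → Euc d} {c : ℕ → ℝ}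
    (hφ : LocallyLipschitz φ) (hk : 0 < k) (hM : 0 ≤ M) (hkM : k * M = b - a)
    (hca : ∀ n, a < c n) (hcanti : Antitone c) (hclim : Tendsto c atTop (𝓝 a))
    (X : ℕ → Euc d → Euc d) (χ : ℕ → Euc d → ℝ)
    (H : ∀ n, CutField φ a b (c n) k M V (X n) (χ n)) :
      ∃ C : ℝ → Euc d → Euc d,
        ContinuousOn (fun p : ℝ × Euc d => C p.1 p.2) (Icc (0:ℝ) 1 ×ˢ {x | φ x ≤ b}) ∧
        (∀ t ∈ Icc (0:ℝ) 1, ∀ x : Euc d, φ x ≤ b → φ (C t x) ≤ b) ∧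
        (∀ x : Euc d, φ x ≤ b → C 0 x = x) ∧
        (∀ t s : ℝ, 0 ≤ t → t < s → s ≤ 1 → ∀ x : Euc d, φ x ≤ b →
          a < φ (C s x) → φ (C s x) - φ (C t x) ≤ -((s - t) * (b - a))) ∧
        (∀ t ∈ Icc (0:ℝ) 1, ∀ x : Euc d, φ x ≤ a → C t x = x) ∧
        (∀ x : Euc d, φ x ≤ b →
          LipschitzOnWith (Real.toNNReal M) (fun s => C s x) (Icc (0:ℝ) 1)) := by
  have hab : a ≤ b := by nlinarith [mul_nonneg hk.le hM]
  have hXM : ∀ n x, ‖X n x‖ ≤ (Real.toNNReal M : ℝ) := by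
    intro n x
    rw [Real.coe_toNNReal _ hM]
    exact ((H n).bd x).trans (mul_le_of_le_one_right hM ((H n).mem x).2)
  choose Φ hΦ using fun n x => exists_sol (H n).smooth _ (hXM n) x
  have hclose : ∀ n m, n ≤ m → ∀ t ∈ Icc (0:ℝ) 1, ∀ x, φ x ≤ b →
      dist (Φ n x t) (Φ m x t) ≤ 2 * (c n - a) / k := by
    intro n m hnm t ht x hx
    rw [le_div_iff₀ hk, mul_comm]
    exact (H n).close (H m) (hcanti hnm) (hca n).le hφ hk.le (hΦ n x) (hΦ m x) hx ht.1 ht.2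
  have hrlim : Tendsto (fun n => 2 * (c n - a) / k) atTop (𝓝 0) := by
    have := ((hclim.sub_const a).const_mul 2).div_const k
    simpa using this
  have hex : ∀ t x, ∃ y, t ∈ Icc (0:ℝ) 1 → φ x ≤ b →
      Tendsto (fun n => Φ n x t) atTop (𝓝 y) := by
    intro t x
    by_cases h : t ∈ Icc (0:ℝ) 1 ∧ φ x ≤ b
    · have hcs : CauchySeq (fun n => Φ n x t) :=
        cauchySeq_of_le_tendsto_0' _ (fun n m hnm => hclose n m hnm t h.1 x h.2) hrlim
      obtain ⟨y, hy⟩ := cauchySeq_tendsto_of_complete hcs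
      exact ⟨y, fun _ _ => hy⟩
    · exact ⟨0, fun h1 h2 => absurd ⟨h1, h2⟩ h⟩
  choose C hC using hex
  have hunif : ∀ n, ∀ t ∈ Icc (0:ℝ) 1, ∀ x, φ x ≤ b →
      dist (Φ n x t) (C t x) ≤ 2 * (c n - a) / k := by
    intro n t ht x hx
    refine le_of_tendsto ((tendsto_const_nhds (x := Φ n x t)).dist (hC t x ht hx)) ?_
    filter_upwards [eventually_ge_atTop n] with m hm using hclose n m hm t ht x hx
  have hφC : ∀ t ∈ Icc (0:ℝ) 1, ∀ x, φ x ≤ b →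
      Tendsto (fun n => φ (Φ n x t)) atTop (𝓝 (φ (C t x))) := fun t ht x hx =>
    (hφ.continuous.tendsto _).comp (hC t x ht hx)
  refine ⟨C, ?_, ?_, ?_, ?_, ?_, ?_⟩
  · have hU : TendstoUniformlyOn (fun n (p : ℝ × Euc d) => Φ n p.2 p.1)
        (fun p : ℝ × Euc d => C p.1 p.2) atTop (Icc (0:ℝ) 1 ×ˢ {x | φ x ≤ b}) := by
      rw [Metric.tendstoUniformlyOn_iff]
      intro e he
      filter_upwards [hrlim.eventually (gt_mem_nhds he)] with n hn p hp
      rw [dist_comm]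
      exact (hunif n p.1 hp.1 p.2 hp.2).trans_lt hn
    refine hU.continuousOn (Eventually.of_forall fun n => ?_).frequently
    exact (flow_cont (H n).smooth _ (hXM n) (Φ n) (hΦ n)).mono
      (prod_mono Subset.rfl (subset_univ _))
  · intro t ht x hx
    refine le_of_tendsto (hφC t ht x hx) (Eventually.of_forall fun n => ?_)
    have := (H n).anti hφ hk.le (hΦ n x) le_rfl ht.1 ht.2
    rw [(hΦ n x).1] at this
    exact this.trans hx
  · intro x hx
    refine tendsto_nhds_unique (hC 0 x (by simp) hx) ?_
    simp only [(hΦ _ x).1]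
    exact tendsto_const_nhds
  · intro t s ht hts hs x hx ha
    have hs' : s ∈ Icc (0:ℝ) 1 := ⟨by linarith, hs⟩
    have ht' : t ∈ Icc (0:ℝ) 1 := ⟨ht, by linarith⟩
    have hlt := hclim.eventually_lt (hφC s hs' x hx) ha
    refine le_of_tendsto ((hφC s hs' x hx).sub (hφC t ht' x hx)) ?_
    filter_upwards [hlt] with n hn
    have := (H n).speed hφ hk.le (hΦ n x) hx ht hts.le hs hn.le
    rw [hkM] at this
    linarith
  · intro t ht x hx
    refine tendsto_nhds_unique (hC t x ht (hx.trans hab)) ?_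
    have : ∀ n, Φ n x t = x := fun n => by
      have := (H n).const (hΦ n x) le_rfl ht.1 ht.2 (by rwa [(hΦ n x).1])
      rwa [(hΦ n x).1] at this
    simp only [this]
    exact tendsto_const_nhds
  · intro x hx
    refine LipschitzOnWith.of_dist_le_mul fun s hs t ht => ?_
    refine le_of_tendsto ((hC s x hs hx).dist (hC t x ht hx)) (Eventually.of_forall fun n => ?_)
    exact ((hΦ n x).lip (hXM n)).dist_le_mul s hs t ht

/-- approximate inverse flow of a Lipschitz function whose Clarke gradient
is uniformly bounded away from zero on `φ⁻¹((a,b])`. -/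
theorem approximate_inverse_flow (d : ℕ) (hd : 1 ≤ d) (a b : ℝ) (hab : a < b)
    (φ : Euc d → ℝ) (hφloc : LocallyLipschitz φ)
    (hφLip : ∃ L : NNReal, LipschitzOnWith L φ (closure {x | a < φ x ∧ φ x ≤ b}))
    (μ : ℝ)
    (hμdef : μ = sInf ((fun x => Delta (clarkeGradient φ x)) '' {x | a < φ x ∧ φ x ≤ b}))
    (hμpos : 0 < μ) :
    ∀ ε : ℝ, 0 < ε → ε < μ →
      ∃ C : ℝ → Euc d → Euc d,
        -- (continuity)
        ContinuousOn (fun p : ℝ × Euc d => C p.1 p.2) (Icc (0:ℝ) 1 ×ˢ {x | φ x ≤ b}) ∧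
        -- C maps [0,1] × φ⁻¹(-∞,b] into φ⁻¹(-∞,b]
        (∀ t ∈ Icc (0:ℝ) 1, ∀ x : Euc d, φ x ≤ b → φ (C t x) ≤ b) ∧
        -- (i)
        (∀ x : Euc d, φ x ≤ b → C 0 x = x) ∧
        -- (ii)
        (∀ t s : ℝ, 0 ≤ t → t < s → s ≤ 1 → ∀ x : Euc d, φ x ≤ b →
          a < φ (C s x) → φ (C s x) ≤ b →
          φ (C s x) - φ (C t x) ≤ -((s - t) * (b - a))) ∧
        -- (iii)
        (∀ t ∈ Icc (0:ℝ) 1, ∀ x : Euc d, φ x ≤ a → C t x = x) ∧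
        -- (iv)
        (∀ x : Euc d, φ x ≤ b →
          LipschitzOnWith (Real.toNNReal ((b - a) / (μ - ε))) (fun s => C s x)
            (Icc (0:ℝ) 1)) ∧
        -- (v)
        (∀ x : Euc d, φ x ≤ b → φ (C 1 x) ≤ a) ∧
        -- in particular, a strong deformation retract
        IsStrongDefRetract {x | φ x ≤ a} {x | φ x ≤ b} := by
  intro ε hε hεμ
  have hk : 0 < μ - ε := by linarith
  have hba : 0 < b - a := by linarith
  have hM : 0 < (b - a) / (μ - ε) := by positivity
  have hkM : (μ - ε) * ((b - a) / (μ - ε)) = b - a := by field_simp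
  have hφc := hφloc.continuous
  have hΔ : ∀ x, a < φ x → φ x ≤ b → μ ≤ Delta (clarkeGradient φ x) := by
    intro x h1 h2
    rw [hμdef]
    refine csInf_le ⟨0, ?_⟩ ⟨x, ⟨h1, h2⟩, rfl⟩
    rintro _ ⟨y, _, rfl⟩
    exact infDist_nonneg
  set M := (b - a) / (μ - ε) with hMdef
  let W : Set (Euc d) := {x | a < φ x ∧ ∃ v, ‖v‖ ≤ M ∧ Desc φ ((μ - ε) * M) x v}
  have hW : IsOpen W := by
    rw [isOpen_iff_mem_nhds]
    rintro x ⟨h1, v, hv, hd'⟩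
    filter_upwards [hφc.continuousAt.eventually (lt_mem_nhds h1), desc_open hd'] with y y1 y2
    exact ⟨y1, v, hv, y2⟩
  obtain ⟨V, hV⟩ := exists_field φ W hW M ((μ - ε) * M) (fun x hx => hx.2)
  have hc : ∀ n : ℕ, a < a + 1 / ((n:ℝ) + 1) := fun n => by
    have : 0 < 1 / ((n:ℝ) + 1) := by positivity
    linarith
  choose X χ hX using fun n : ℕ => exists_cut φ hφc a b (a + 1 / ((n:ℝ) + 1)) W hW
    (fun x hx => hx.1)
    (fun x h1 h2 => ⟨h1, exists_desc φ hφloc x μ (μ - ε) M hk (by linarith) hM (hΔ x h1 h2)⟩)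
    M ((μ - ε) * M) (hc n) V hV
  have H : ∀ n : ℕ, CutField φ a b (a + 1 / ((n:ℝ) + 1)) (μ - ε) M V (X n) (χ n) := fun n => by
    obtain ⟨h1, h2, h3, h4, h5, h6⟩ := hX n
    exact ⟨h1, h2, h3, h4, h5, h6⟩
  obtain ⟨C, h1, h2, h3, h4, h5, h6⟩ := flow_limit hφloc hk hM.le hkM hc
    (fun n m hnm => by
      have := one_div_le_one_div_of_le (a := (n:ℝ) + 1) (b := (m:ℝ) + 1) (by positivity)
        (by exact_mod_cast Nat.succ_le_succ hnm)
      simpa using this)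
    (by simpa using tendsto_one_div_add_atTop_nhds_zero_nat.const_add a) X χ H
  have h7 : ∀ x : Euc d, φ x ≤ b → φ (C 1 x) ≤ a := by
    intro x hx
    by_contra! hlt
    have := h4 0 1 le_rfl one_pos le_rfl x hx hlt
    rw [h3 x hx] at this
    linarith
  exact ⟨C, h1, h2, h3, fun t s ht hts hs x hx ha _ => h4 t s ht hts hs x hx ha, h5, h6, h7,
    C, h1, fun t ht x hx => h2 t ht x hx, fun x hx => h3 x hx, fun x hx => h7 x hx,
    fun t ht x hx => h5 t ht x hx⟩
end
end

section
/- Let μ ∈ (0,1] and let X ⊆ ℝ^d be a complementary regular set with reach_μ(X) > 0. Then for every x ∈ ∂X there exists a unit vector u ∈ ℝ^d such that the closed ball of radius μ centered at u is contained in Tan(X̄ᶜ, x). -/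
open Metric Set Filter Topology RealInnerProductSpace

noncomputable section

variable {d : ℕ}

/-- The distance function has gradient `e` at interior points of a segment to a nearest point. -/
lemma aux_grad (X : Set (Euc d)) (z e : Euc d) (hz : z ∈ X) (he : ‖e‖ = 1) (a b : ℝ)
    (ha : 0 < a) (hb : 0 < b) (hy : infDist (z + (a + b) • e) X = a + b) :
    HasGradientAt (fun y => infDist y X) e (z + a • e) := by
  set p := z + a • e with hp
  have key : ∀ (w : Euc d) (c : ℝ), 0 < c →
      ‖c • e + w‖ ≤ c + ⟪e, w⟫ + ‖w‖ ^ 2 / (2 * c) := by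
    intro w c hc
    have h1 : ‖c • e + w‖ ^ 2 = c ^ 2 + 2 * (c * ⟪e, w⟫) + ‖w‖ ^ 2 := by
      rw [norm_add_sq_real, norm_smul, he, real_inner_smul_left]; simp
    have h2 : c + ⟪e, w⟫ + ‖w‖ ^ 2 / (2 * c) = (‖c • e + w‖ ^ 2 + c ^ 2) / (2 * c) := by
      rw [h1]; field_simp; ring
    rw [h2, le_div_iff₀ (by positivity)]
    nlinarith [sq_nonneg (‖c • e + w‖ - c)]
  have up : ∀ w : Euc d, infDist (p + w) X ≤ a + ⟪e, w⟫ + ‖w‖ ^ 2 / (2 * a) := by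
    intro w
    refine (infDist_le_dist_of_mem hz).trans ?_
    rw [dist_eq_norm]
    have : p + w - z = a • e + w := by rw [hp]; abel
    rw [this]; exact key w a ha
  have low : ∀ w : Euc d, a + ⟪e, w⟫ - ‖w‖ ^ 2 / (2 * b) ≤ infDist (p + w) X := by
    intro w
    have h1 := infDist_le_infDist_add_dist (s := X) (x := z + (a + b) • e) (y := p + w)
    rw [hy, dist_eq_norm] at h1
    have : z + (a + b) • e - (p + w) = b • e + (-w) := by rw [hp, add_smul]; abel
    rw [this] at h1
    have h2 := key (-w) b hb
    rw [inner_neg_right, norm_neg] at h2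
    linarith
  have hp0 : infDist p X = a := by
    have h1 := up 0
    have h2 := low 0
    simp at h1 h2
    linarith
  rw [hasGradientAt_iff_isLittleO, ]
  have hO : (fun q : Euc d => infDist q X - infDist p X - ⟪e, q - p⟫) =O[𝓝 p]
      (fun q => ‖q - p‖ ^ 2) := by
    refine Asymptotics.IsBigO.of_bound (1 / (2 * a) + 1 / (2 * b)) (Eventually.of_forall ?_)
    intro q
    have h1 := up (q - p)
    have h2 := low (q - p)
    rw [add_sub_cancel] at h1 h2
    rw [hp0, Real.norm_eq_abs, norm_pow, norm_norm, abs_le]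
    have h3 : 0 ≤ ‖q - p‖ ^ 2 / (2 * a) := by positivity
    have h4 : 0 ≤ ‖q - p‖ ^ 2 / (2 * b) := by positivity
    have h5 : (1 / (2 * a) + 1 / (2 * b)) * ‖q - p‖ ^ 2
      = ‖q - p‖ ^ 2 / (2 * a) + ‖q - p‖ ^ 2 / (2 * b) := by ring
    rw [h5]
    constructor <;> linarith
  exact hO.trans_isLittleO (Asymptotics.isLittleO_pow_sub_sub p one_lt_two)

/-- Unit vectors from nearest points belong to the Clarke gradient. -/
lemma aux_mem_clarke (X : Set (Euc d)) (y z : Euc d) (hz : z ∈ X) (hy : 0 < infDist y X)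
    (hd : dist y z = infDist y X) :
    (infDist y X)⁻¹ • (y - z) ∈ clarkeGradient (fun y => infDist y X) y := by
  apply subset_convexHull
  set r := infDist y X with hr
  set e := r⁻¹ • (y - z) with he
  have hre : y = z + r • e := by
    rw [he, smul_inv_smul₀ hy.ne']; abel
  have hen : ‖e‖ = 1 := by
    rw [he, norm_smul, ← dist_eq_norm, hd, norm_inv, Real.norm_of_nonneg hy.le,
      inv_mul_cancel₀ hy.ne']
  have hg : ∀ i : ℕ, HasGradientAt (fun y => infDist y X) e
      (z + (r - r * (1 / ((i : ℝ) + 2))) • e) := by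
    intro i
    have h2 : (1 : ℝ) / ((i : ℝ) + 2) < 1 := by
      rw [div_lt_one (by positivity)]; have : (0:ℝ) ≤ i := i.cast_nonneg
      linarith
    refine aux_grad X z e hz hen _ (r * (1 / ((i : ℝ) + 2))) (by nlinarith) (by positivity) ?_
    rw [sub_add_cancel, ← hre]
  refine ⟨fun i => z + (r - r * (1 / ((i : ℝ) + 2))) • e, ?_, fun i => (hg i).differentiableAt, ?_⟩
  · have h1 : Tendsto (fun i : ℕ => (1 : ℝ) / ((i : ℝ) + 2)) atTop (𝓝 0) := by
      have := (tendsto_add_atTop_iff_nat 1).2 (tendsto_one_div_add_atTop_nhds_zero_nat (𝕜 := ℝ))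
      refine this.congr fun i => ?_
      push_cast; ring
    have h2 := tendsto_const_nhds (x := z) |>.add
      (((tendsto_const_nhds (x := r)).sub (h1.const_mul r)).smul_const e)
    rw [mul_zero, sub_zero, ← hre] at h2
    exact h2
  · refine tendsto_const_nhds.congr fun i => (hg i).gradient.symm

/-- A direction of ascent with rate at least `μ`. -/
lemma aux_dir (X : Set (Euc d)) (hXc : IsCompact X) (hXn : X.Nonempty) (μ : ℝ) (hμ : 0 < μ)
    (y : Euc d) (hy : 0 < infDist y X)
    (hD : μ ≤ Delta (clarkeGradient (fun y => infDist y X) y)) :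
    ∃ v : Euc d, ‖v‖ = 1 ∧ ∀ z ∈ X, dist y z = infDist y X →
      μ ≤ ⟪v, (infDist y X)⁻¹ • (y - z)⟫ := by
  set G := clarkeGradient (fun y => infDist y X) y with hG
  have hGn : G.Nonempty := by
    obtain ⟨z, hz, h⟩ := hXc.exists_infDist_eq_dist hXn y
    exact ⟨_, aux_mem_clarke X y z hz hy h.symm⟩
  have hGc : Convex ℝ (closure G) := (convex_convexHull ℝ _).closure
  obtain ⟨w, hw, hmin⟩ := exists_norm_eq_iInf_of_complete_convex hGn.closure
    isClosed_closure.isComplete hGc (0 : Euc d)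
  rw [norm_eq_iInf_iff_real_inner_le_zero hGc hw] at hmin
  have hwn : μ ≤ ‖w‖ := by
    refine hD.trans ?_
    rw [Delta, ← infDist_closure]
    refine (infDist_le_dist_of_mem hw).trans ?_
    simp
  have hw0 : 0 < ‖w‖ := hμ.trans_le hwn
  refine ⟨‖w‖⁻¹ • w, ?_, ?_⟩
  · rw [norm_smul, norm_inv, norm_norm, inv_mul_cancel₀ hw0.ne']
  · intro z hz hd
    have h := hmin _ (subset_closure (aux_mem_clarke X y z hz hy hd))
    rw [zero_sub, inner_neg_left, inner_sub_right, real_inner_self_eq_norm_sq] at h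
    rw [real_inner_smul_left, inv_mul_eq_div, le_div_iff₀ hw0]
    nlinarith

/-- Ascent: points at distance `ρ` from `X` can be reached within a controlled distance. -/
lemma aux_ascent (X : Set (Euc d)) (hXc : IsCompact X) (hXn : X.Nonempty) (μ s : ℝ)
    (hμ : 0 < μ) (hs : ∀ x : Euc d, 0 < infDist x X → infDist x X ≤ s →
      μ ≤ Delta (clarkeGradient (fun y => infDist y X) x))
    (μ' : ℝ) (hμ'0 : 0 < μ') (hμ' : μ' < μ) (ρ : ℝ) (hρ : ρ ≤ s)
    (y0 : Euc d) (h0 : 0 < infDist y0 X) (h0ρ : infDist y0 X ≤ ρ) :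
    ∃ y : Euc d, infDist y X = ρ ∧ μ' * dist y y0 ≤ ρ := by
  have hcont : Continuous (fun y : Euc d => infDist y X) := continuous_infDist_pt X
  have hK : IsCompact {y : Euc d | infDist y X ≤ ρ} := by
    refine hXc.cthickening (r := ρ) |>.of_isClosed_subset
      (isClosed_le hcont continuous_const) fun y hy => ?_
    obtain ⟨z, hz, h⟩ := hXc.exists_infDist_eq_dist hXn y
    exact mem_cthickening_of_dist_le y z ρ X hz (h ▸ hy)
  obtain ⟨y, hyK, hmax⟩ := hK.exists_isMaxOn ⟨y0, h0ρ⟩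
    (f := fun y => infDist y X - μ' * dist y y0) (by fun_prop)
  have hyK' : infDist y X ≤ ρ := hyK
  have h1 : infDist y0 X - μ' * dist y0 y0 ≤ infDist y X - μ' * dist y y0 := hmax h0ρ
  rw [dist_self, mul_zero, sub_zero] at h1
  have hdn : 0 ≤ μ' * dist y y0 := by positivity
  rcases hyK'.lt_or_eq with hlt | heq
  swap
  · exact ⟨y, heq, by linarith⟩
  exfalso
  have hypos : 0 < infDist y X := by linarith
  obtain ⟨v, hv, hvz⟩ := aux_dir X hXc hXn μ hμ y hypos (hs y hypos (hyK'.trans hρ))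
  set h : ℕ → ℝ := fun n => 1 / ((n : ℝ) + 1) with hh
  have hhpos : ∀ n, 0 < h n := fun n => by rw [hh]; positivity
  have hh0 : Tendsto h atTop (𝓝 0) := tendsto_one_div_add_atTop_nhds_zero_nat
  have hyn : Tendsto (fun n => y + h n • v) atTop (𝓝 y) := by
    simpa using (tendsto_const_nhds (x := y)).add (hh0.smul_const v)
  have hz : ∀ n, ∃ z ∈ X, infDist (y + h n • v) X = dist (y + h n • v) z :=
    fun n => hXc.exists_infDist_eq_dist hXn _
  choose z hzX hzd using hz
  obtain ⟨z', hz'X, φ, hφ, hzφ⟩ := hXc.tendsto_subseq hzX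
  have hynφ := hyn.comp hφ.tendsto_atTop
  have hz'd : dist y z' = infDist y X := by
    have a1 := (hcont.tendsto y).comp hynφ
    have a2 := hynφ.dist hzφ
    refine tendsto_nhds_unique (a2.congr fun n => ?_) a1
    exact (hzd (φ n)).symm
  have hfin : ∀ᶠ n in atTop, ⟪v, y - z (φ n)⟫ ≤ μ' * dist y (z (φ n)) := by
    have hev : ∀ᶠ n in atTop, infDist ((fun n => y + h n • v) (φ n)) X < ρ :=
      ((hcont.tendsto y).comp hynφ).eventually_lt_const hlt
    filter_upwards [hev] with n hn
    set k := h (φ n) with hk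
    have hkpos : 0 < k := hhpos _
    have b1 : infDist (y + k • v) X - μ' * dist (y + k • v) y0
        ≤ infDist y X - μ' * dist y y0 := hmax (le_of_lt hn)
    have b2 : dist (y + k • v) y0 ≤ k + dist y y0 := by
      refine (dist_triangle _ y _).trans ?_
      rw [dist_eq_norm (y + k • v) y, add_sub_cancel_left, norm_smul, hv, Real.norm_of_nonneg hkpos.le, mul_one]
    have b3 : infDist y X ≤ dist y (z (φ n)) := infDist_le_dist_of_mem (hzX _)
    have b4 := hzd (φ n)
    rw [← hk] at b4
    set q := y - z (φ n) with hq
    have b5 : dist (y + k • v) (z (φ n)) = ‖q + k • v‖ := by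
      rw [dist_eq_norm, hq]; congr 1; abel
    have b6 : dist y (z (φ n)) = ‖q‖ := dist_eq_norm _ _
    have b7 : ‖q + k • v‖ ≤ ‖q‖ + μ' * k := by
      rw [← b5, ← b6, ← b4]
      nlinarith [mul_le_mul_of_nonneg_left b2 hμ'0.le]
    have b8 : ⟪q, q + k • v⟫ ≤ ‖q‖ * ‖q + k • v‖ := real_inner_le_norm _ _
    rw [inner_add_right, real_inner_self_eq_norm_sq, real_inner_smul_right,
      real_inner_comm] at b8
    rw [b6]
    have b9 := mul_le_mul_of_nonneg_left b7 (norm_nonneg q)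
    have b10 : k * ⟪v, q⟫ ≤ k * (μ' * ‖q‖) := by nlinarith
    exact le_of_mul_le_mul_left b10 hkpos
  have hlim : ⟪v, y - z'⟫ ≤ μ' * dist y z' := by
    refine le_of_tendsto_of_tendsto ?_ ?_ hfin
    · exact tendsto_const_nhds.inner (tendsto_const_nhds.sub hzφ)
    · exact (tendsto_const_nhds.dist hzφ).const_mul μ'
  have hc := hvz z' hz'X hz'd
  rw [real_inner_smul_right, inv_mul_eq_div, le_div_iff₀ hypos, ← hz'd] at hc
  rw [← hz'd] at hypos
  nlinarith

/-- tangent cones of complements of complementary regular sets contain a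
ball of radius `μ` centered at a unit vector. -/
theorem tangentCone_compSet_contains_ball (d : ℕ) (μ : ℝ) (hμ0 : 0 < μ) (hμ1 : μ ≤ 1)
    (X : Set (Euc d)) (hX : ComplementaryRegular X) (hreach : MuReachPos μ X) :
    ∀ x ∈ frontier X, ∃ u : Euc d, ‖u‖ = 1 ∧
      closedBall u μ ⊆ tangentConeAt ℝ (compSet X) x := by
  rintro x hx
  obtain ⟨hXn, hXc, -, -, -⟩ := hX
  obtain ⟨s, hs0, hs⟩ := hreach
  have hxX : x ∈ X := hXc.isClosed.frontier_subset hx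
  have hxC : x ∈ closure Xᶜ := by
    rw [frontier_eq_closure_inter_closure] at hx; exact hx.2
  set ρ : ℕ → ℝ := fun n => s * (1 / ((n : ℝ) + 1)) with hρ
  set η : ℕ → ℝ := fun n => 1 / ((n : ℝ) + 1) with hη
  have hη0 : ∀ n, 0 < η n := fun n => by rw [hη]; positivity
  have hη1 : ∀ n, η n ≤ 1 := fun n => by
    have : (0:ℝ) ≤ n := n.cast_nonneg
    rw [hη]; simp only; rw [div_le_one (by positivity)]; linarith
  have hρ0 : ∀ n, 0 < ρ n := fun n => mul_pos hs0 (hη0 n)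
  have hρs : ∀ n, ρ n ≤ s := fun n => mul_le_of_le_one_right hs0.le (hη1 n)
  have hηt : Tendsto η atTop (𝓝 0) := tendsto_one_div_add_atTop_nhds_zero_nat
  have hρt : Tendsto ρ atTop (𝓝 0) := by simpa using hηt.const_mul s
  have hex : ∀ n, ∃ u : Euc d, ‖u‖ ≤ 1 + 2 * η n ∧ infDist (x + (ρ n / μ) • u) X = ρ n := by
    intro n
    have hδ : 0 < ρ n * η n := mul_pos (hρ0 n) (hη0 n)
    obtain ⟨y0, hy0, hxy0⟩ := Metric.mem_closure_iff.1 hxC _ hδ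
    have h0 : 0 < infDist y0 X :=
      (hXc.isClosed.notMem_iff_infDist_pos hXn).1 hy0
    have hle : ρ n * η n ≤ ρ n := mul_le_of_le_one_right (hρ0 n).le (hη1 n)
    have h1 : infDist y0 X ≤ ρ n := by
      refine (infDist_le_dist_of_mem hxX).trans ?_
      rw [dist_comm]; linarith
    have hpos : 0 < 1 + η n := by linarith [hη0 n]
    obtain ⟨y, hy, hyd⟩ := aux_ascent X hXc hXn μ s hμ0 hs (μ / (1 + η n)) (by positivity)
      (div_lt_self hμ0 (by linarith [hη0 n])) (ρ n) (hρs n) y0 h0 h1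
    refine ⟨(μ / ρ n) • (y - x), ?_, ?_⟩
    · have h2 : dist y x ≤ dist y y0 + ρ n * η n := by
        refine (dist_triangle y y0 x).trans ?_
        rw [dist_comm y0 x]; linarith
      have h3 : μ * dist y y0 ≤ ρ n * (1 + η n) := by
        rw [div_mul_eq_mul_div, div_le_iff₀ hpos] at hyd; exact hyd
      rw [norm_smul, ← dist_eq_norm, Real.norm_of_nonneg (div_pos hμ0 (hρ0 n)).le,
        div_mul_eq_mul_div, div_le_iff₀ (hρ0 n)]
      nlinarith [mul_le_mul_of_nonneg_left h2 hμ0.le, mul_le_mul_of_nonneg_right hμ1 hδ.le]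
    · rw [smul_smul, div_mul_div_cancel₀ hμ0.ne', div_self (hρ0 n).ne', one_smul,
        add_sub_cancel, hy]
  choose u hu hud using hex
  have hub : ∀ n, u n ∈ closedBall (0 : Euc d) 3 := fun n => by
    rw [mem_closedBall_zero_iff]; linarith [hu n, hη1 n]
  obtain ⟨u', -, φ, hφ, huφ⟩ := (isCompact_closedBall (0 : Euc d) 3).tendsto_subseq hub
  have hu' : ‖u'‖ ≤ 1 := by
    refine le_of_tendsto_of_tendsto' huφ.norm
      (g := fun n => 1 + 2 * η (φ n)) ?_ fun n => hu (φ n)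
    simpa using ((hηt.comp hφ.tendsto_atTop).const_mul 2).const_add 1
  have hball : ∀ w : Euc d, ‖w‖ ≤ μ → ∀ t : ℝ, t • (u' + w) ∈ tangentConeAt ℝ (compSet X) x := by
    intro w hw t
    have hρφ := hρt.comp hφ.tendsto_atTop
    have hlim : Tendsto (fun n => u (φ n) + w) atTop (𝓝 (u' + w)) := huφ.add_const w
    refine mem_tangentConeAt_of_seq atTop (fun n => t * (μ / ρ (φ n)))
      (fun n => (ρ (φ n) / μ) • (u (φ n) + w)) ?_ (Eventually.of_forall fun n => ?_) ?_
    · have := (hρφ.div_const μ).smul hlim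
      simpa using this
    · have hsub : closedBall (x + (ρ (φ n) / μ) • u (φ n)) (ρ (φ n)) ⊆ compSet X := by
        rw [← closure_ball _ (hρ0 (φ n)).ne']
        refine closure_mono fun q hq hqX => ?_
        have := infDist_le_dist_of_mem (x := x + (ρ (φ n) / μ) • u (φ n)) hqX
        rw [hud, dist_comm] at this
        exact absurd hq (not_lt.2 this)
      apply hsub
      rw [mem_closedBall, dist_eq_norm, smul_add, ← add_assoc, add_sub_cancel_left, norm_smul,
        Real.norm_of_nonneg (div_pos (hρ0 _) hμ0).le, div_mul_eq_mul_div, div_le_iff₀ hμ0]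
      exact mul_le_mul_of_nonneg_left hw (hρ0 _).le
    · refine (hlim.const_smul t).congr fun n => ?_
      have h1 := (hρ0 (φ n)).ne'
      rw [smul_smul, mul_assoc, div_mul_div_cancel₀ h1, div_self hμ0.ne', mul_one]
  by_cases h0 : u' = 0
  · have hμn := hμ0.ne
    obtain ⟨y, hy⟩ : ∃ y : Euc d, y ≠ x := by
      obtain ⟨y0, hy0, -⟩ := Metric.mem_closure_iff.1 hxC 1 one_pos
      exact ⟨y0, fun h => hy0 (h ▸ hxX)⟩
    have hn : ‖y - x‖ ≠ 0 := norm_ne_zero_iff.2 (sub_ne_zero.2 hy)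
    refine ⟨‖y - x‖⁻¹ • (y - x), ?_, ?_⟩
    · rw [norm_smul, norm_inv, norm_norm, inv_mul_cancel₀ hn]
    · intro v _
      have hp : 0 < ‖v‖ + 1 := by positivity
      have h := hball ((μ / (‖v‖ + 1)) • v) (by
        rw [norm_smul, Real.norm_of_nonneg (by positivity), div_mul_eq_mul_div, div_le_iff₀ hp]
        nlinarith) ((‖v‖ + 1) / μ)
      rwa [h0, zero_add, smul_smul, div_mul_div_cancel₀ hμ0.ne', div_self hp.ne', one_smul] at h
  · have hn : 0 < ‖u'‖ := norm_pos_iff.2 h0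
    refine ⟨‖u'‖⁻¹ • u', ?_, ?_⟩
    · rw [norm_smul, norm_inv, norm_norm, inv_mul_cancel₀ hn.ne']
    · intro v hv
      rw [mem_closedBall, dist_eq_norm] at hv
      have h := hball (‖u'‖ • (v - ‖u'‖⁻¹ • u')) (by
        rw [norm_smul, norm_norm]
        nlinarith [norm_nonneg (v - ‖u'‖⁻¹ • u')]) ‖u'‖⁻¹
      rwa [smul_sub, smul_inv_smul₀ hn.ne', add_sub_cancel, inv_smul_smul₀ hn.ne'] at h
end
end
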